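/- arXiv:1110.0104 — 2 statements merged into one kernel-verified Lean document; each statement's English description precedes it below -/
import Mathlib

section
/- Fix an integer j ≥ 1, and let R ⊆ A be the ℂ-span of the monomials z^l u^i with 1 ≤ i ≤ n and k·i − j + 1 ≤ l ≤ j − 1. For every element q of the ideal uA (i.e. every q ∈ A whose u⁰-coefficient vanishes) there exists a unique p ∈ R such that q − p ∈ z^j·O_U + z^{−j}·O_V; equivalently, there exist f ∈ O_U and g ∈ O_V with q = p + z^j·f − z^{−j}·g, and the upper-triangular matrices ((1,g),(0,1)) and ((1,f),(0,1)) then satisfy ((1,g),(0,1))·M_q = M_p·((1,f),(0,1)), so every rank-2 bundle with transition matrix M_q is isomorphic to E_p with p in the normal form R. (This is the pointwise content of the normal-form lemma for transition matrices of extensions of O(j) by O(−j) on Z_k^{(n)}.) -/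
set_option synthInstance.maxHeartbeats 1000000
set_option maxHeartbeats 1000000

noncomputable section

/-- The ring of Laurent polynomials `ℂ[z,z⁻¹]`. -/
abbrev Lz : Type := LaurentPolynomial ℂ

/-- The ring `P = ℂ[z,z⁻¹][[u]]` of formal power series in `u` with Laurent
polynomial coefficients. -/
abbrev Pz : Type := PowerSeries Lz

/-- The monomial `z^l u^i` as an element of `P`. -/
def mon (l : ℤ) (i : ℕ) : Pz := PowerSeries.monomial (R := Lz) i (LaurentPolynomial.T l)

/-- The ideal `(u^{n+1})` of `P`. -/
def In (n : ℕ) : Ideal Pz := Ideal.span {(PowerSeries.X : Pz) ^ (n + 1)}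

/-- The ring `A = ℂ[z,z⁻¹][u]/(u^{n+1})`, the coordinate ring of the overlap of the two
standard charts of the `n`-th infinitesimal neighborhood `Z_k^{(n)}`. -/
abbrev Aq (n : ℕ) : Type := Pz ⧸ In n

/-- The quotient map `P → A`. -/
def toA (n : ℕ) : Pz →+* Aq n := Ideal.Quotient.mk (In n)

/-- The monomial `z^l u^i` as an element of `A`. -/
def monA (n : ℕ) (l : ℤ) (i : ℕ) : Aq n := toA n (mon l i)

/-- `O_U ⊆ A`: the `ℂ`-span of the monomials `z^l u^i` with `l ≥ 0`, `0 ≤ i ≤ n`. -/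
def OU (n : ℕ) : Submodule ℂ (Aq n) :=
  Submodule.span ℂ {x | ∃ l : ℤ, ∃ i : ℕ, 0 ≤ l ∧ i ≤ n ∧ x = monA n l i}

/-- `O_V ⊆ A`: the `ℂ`-span of the monomials `z^l u^i` with `l ≤ k·i`, `0 ≤ i ≤ n`. -/
def OV (k n : ℕ) : Submodule ℂ (Aq n) :=
  Submodule.span ℂ {x | ∃ l : ℤ, ∃ i : ℕ, l ≤ k * i ∧ i ≤ n ∧ x = monA n l i}

/-- The submodule `a·S` obtained from a submodule `S` by multiplying by a fixed element `a`. -/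
def msmul {n : ℕ} (a : Aq n) (S : Submodule ℂ (Aq n)) : Submodule ℂ (Aq n) :=
  Submodule.map (LinearMap.mulLeft ℂ a) S

/-- `R ⊆ A`: the `ℂ`-span of the monomials `z^l u^i` with `1 ≤ i ≤ n` and
`k·i − j + 1 ≤ l ≤ j − 1` (the space of normal forms of extension classes). -/
def Rmod (k n : ℕ) (j : ℤ) : Submodule ℂ (Aq n) :=
  Submodule.span ℂ
    {x | ∃ l : ℤ, ∃ i : ℕ, 1 ≤ i ∧ i ≤ n ∧ (k : ℤ) * i - j + 1 ≤ l ∧ l ≤ j - 1 ∧ x = monA n l i}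

/-- The transition matrix `M_p = ((z^j, p),(0, z^{−j}))` of the bundle `E_p`. -/
def Mmat (n : ℕ) (j : ℤ) (p : Aq n) : Matrix (Fin 2) (Fin 2) (Aq n) :=
  !![monA n j 0, p; 0, monA n (-j) 0]

/-- `E_p ≅ E_{p′}`: there are matrices `A₁` with entries in `O_U` and `B₁` with entries
in `O_V`, with `det A₁` a unit of `O_U` and `det B₁` a unit of `O_V`, with
`B₁ · M_p = M_{p′} · A₁`. -/
def BundleIso (k n : ℕ) (j : ℤ) (p p' : Aq n) : Prop :=
  ∃ A₁ B₁ : Matrix (Fin 2) (Fin 2) (Aq n),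
    (∀ a b : Fin 2, A₁ a b ∈ OU n) ∧ (∀ a b : Fin 2, B₁ a b ∈ OV k n) ∧
    (∃ w ∈ OU n, A₁.det * w = 1) ∧ (∃ w ∈ OV k n, B₁.det * w = 1) ∧
    B₁ * Mmat n j p = Mmat n j p' * A₁

theorem toA_eq_iff (n : ℕ) (x y : Pz) :
    toA n x = toA n y ↔ ∀ i ≤ n, PowerSeries.coeff i x = PowerSeries.coeff i y := by
  rw [toA, Ideal.Quotient.eq, In, Ideal.mem_span_singleton, PowerSeries.X_pow_dvd_iff]
  constructor
  · intro h i hi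
    have := h i (by omega)
    rwa [map_sub, sub_eq_zero] at this
  · intro h i hi
    rw [map_sub, sub_eq_zero]
    exact h i (by omega)

theorem monA_mul (n : ℕ) (l m : ℤ) (a b : ℕ) :
    monA n l a * monA n m b = monA n (l + m) (a + b) := by
  rw [monA, monA, monA, ← map_mul, mon, mon, mon, PowerSeries.monomial_mul_monomial,
    LaurentPolynomial.T_add]

theorem monA_zero (n : ℕ) (l : ℤ) (i : ℕ) (h : n < i) : monA n l i = 0 := by
  rw [monA, ← map_zero (toA n), toA_eq_iff]
  intro m hm
  rw [mon, PowerSeries.coeff_monomial, if_neg (by omega), map_zero]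

/-- Span of the monomials satisfying a predicate. -/
def spanP (n : ℕ) (P : ℤ → ℕ → Prop) : Submodule ℂ (Aq n) :=
  Submodule.span ℂ {x | ∃ l : ℤ, ∃ i : ℕ, i ≤ n ∧ P l i ∧ x = monA n l i}

theorem toA_smul (n : ℕ) (c : ℂ) (x : Pz) : toA n (c • x) = c • toA n x := rfl

theorem spanP_coeff (n : ℕ) (P : ℤ → ℕ → Prop) (a : Aq n) (ha : a ∈ spanP n P) :
    ∃ x : Pz, toA n x = a ∧ ∀ (l : ℤ) (i : ℕ), ¬ P l i →
      (PowerSeries.coeff i x : Lz).coeff l = 0 := by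
  induction ha using Submodule.span_induction with
  | mem x hx =>
    obtain ⟨l, i, hi, hP, rfl⟩ := hx
    refine ⟨mon l i, rfl, ?_⟩
    intro l' i' h
    rw [mon, PowerSeries.coeff_monomial]
    split_ifs with h1
    · subst h1
      rw [LaurentPolynomial.T_apply, if_neg]
      rintro rfl
      exact h hP
    · simp
  | zero => exact ⟨0, map_zero _, by simp⟩
  | add x y _ _ hx hy =>
    obtain ⟨x', rfl, hx⟩ := hx
    obtain ⟨y', rfl, hy⟩ := hy
    refine ⟨x' + y', map_add _ _ _, fun l i h => ?_⟩
    rw [map_add, AddMonoidAlgebra.coeff_add, Finsupp.add_apply, hx l i h, hy l i h, add_zero]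
  | smul c x _ hx =>
    obtain ⟨x', rfl, hx⟩ := hx
    refine ⟨c • x', toA_smul _ _ _, fun l i h => ?_⟩
    have : (PowerSeries.coeff i (c • x') : Lz) = c • PowerSeries.coeff i x' := by simp
    rw [this, AddMonoidAlgebra.coeff_smul, Finsupp.smul_apply, hx l i h, smul_zero]

theorem spanP_disj (n : ℕ) (P Q : ℤ → ℕ → Prop) (h : ∀ l i, P l i → Q l i → False)
    (a : Aq n) (ha : a ∈ spanP n P) (hb : a ∈ spanP n Q) : a = 0 := by
  obtain ⟨x, rfl, hx⟩ := spanP_coeff n P a ha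
  obtain ⟨y, hxy, hy⟩ := spanP_coeff n Q _ hb
  rw [← map_zero (toA n), toA_eq_iff]
  intro i hi
  apply LaurentPolynomial.ext
  intro l
  rw [map_zero]
  by_cases hP : P l i
  · rw [← (toA_eq_iff n y x).1 hxy i hi, hy l i (fun hQ => h l i hP hQ)]
    rfl
  · rw [hx l i hP]
    rfl

theorem monomial_mem (n i : ℕ) (hi : i ≤ n) (c : Lz) :
    toA n (PowerSeries.monomial i c) ∈ spanP n (fun _ _ => True) := by
  induction c using LaurentPolynomial.induction_on' with
  | add p q hp hq =>
    rw [map_add, map_add]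
    exact Submodule.add_mem _ hp hq
  | C_mul_T l a =>
    rw [← LaurentPolynomial.smul_eq_C_mul]
    have : toA n (PowerSeries.monomial i (a • (LaurentPolynomial.T l : Lz))) = a • monA n l i := by
      rw [monA, ← toA_smul, mon]
      congr 1
      ext m
      simp only [PowerSeries.coeff_monomial, PowerSeries.coeff_smul]
      split_ifs <;> simp
    rw [this]
    exact Submodule.smul_mem _ _ (Submodule.subset_span ⟨l, i, hi, trivial, rfl⟩)

theorem mem_spanP_top (n : ℕ) (a : Aq n) : a ∈ spanP n (fun _ _ => True) := by
  obtain ⟨x, rfl⟩ : ∃ x, toA n x = a := Ideal.Quotient.mk_surjective a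
  have : toA n x = toA n (∑ i ∈ Finset.range (n + 1),
      PowerSeries.monomial i (PowerSeries.coeff i x)) := by
    rw [toA_eq_iff]
    intro i hi
    rw [map_sum, Finset.sum_eq_single i]
    · simp
    · intro b _ hb
      rw [PowerSeries.coeff_monomial, if_neg (Ne.symm hb)]
    · intro h
      simp at h
      omega
  rw [this, map_sum]
  exact Submodule.sum_mem _ fun i hi => monomial_mem n i (by simp at hi; omega) _

theorem W_le (k n : ℕ) (j : ℤ) :
    msmul (monA n j 0) (OU n) ⊔ msmul (monA n (-j) 0) (OV k n) ≤
      spanP n (fun l i => j ≤ l ∨ l ≤ k * i - j) := by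
  refine sup_le ?_ ?_
  · rw [msmul, OU, Submodule.map_span_le]
    rintro _ ⟨l, i, hl, hi, rfl⟩
    rw [LinearMap.mulLeft_apply, monA_mul]
    exact Submodule.subset_span ⟨_, _, by omega, by left; omega, rfl⟩
  · rw [msmul, OV, Submodule.map_span_le]
    rintro _ ⟨l, i, hl, hi, rfl⟩
    rw [LinearMap.mulLeft_apply, monA_mul]
    refine Submodule.subset_span ⟨_, _, by omega, ?_, rfl⟩
    right
    rw [Nat.zero_add]
    linarith

theorem R_le (k n : ℕ) (j : ℤ) :
    Rmod k n j ≤ spanP n (fun l i => ¬ (j ≤ l ∨ l ≤ k * i - j)) := by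
  rw [Rmod, Submodule.span_le]
  rintro _ ⟨l, i, h1, hi, h2, h3, rfl⟩
  refine Submodule.subset_span ⟨l, i, hi, ?_, rfl⟩
  rintro (h | h) <;> linarith

theorem uA_le (k n : ℕ) (j : ℤ) (q : Aq n) (hq : q ∈ Ideal.span {monA n 0 1}) :
    q ∈ Rmod k n j ⊔ (msmul (monA n j 0) (OU n) ⊔ msmul (monA n (-j) 0) (OV k n)) := by
  obtain ⟨b, rfl⟩ := Ideal.mem_span_singleton'.1 hq
  have hb := mem_spanP_top n b
  induction hb using Submodule.span_induction with
  | zero => simp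
  | add x y _ _ hx hy =>
    rw [add_mul]
    exact Submodule.add_mem _ (hx (Ideal.mem_span_singleton'.2 ⟨x, rfl⟩))
      (hy (Ideal.mem_span_singleton'.2 ⟨y, rfl⟩))
  | smul c x _ hx =>
    rw [smul_mul_assoc]
    exact Submodule.smul_mem _ _ (hx (Ideal.mem_span_singleton'.2 ⟨x, rfl⟩))
  | mem x hx =>
    obtain ⟨l, i, hi, -, rfl⟩ := hx
    rw [monA_mul, add_zero]
    by_cases hin : n < i + 1
    · rw [monA_zero n _ _ hin]
      exact Submodule.zero_mem _
    by_cases h1 : j ≤ l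
    · refine (le_sup_left.trans le_sup_right : msmul (monA n j 0) (OU n) ≤ _) ?_
      refine ⟨monA n (l - j) (i + 1), Submodule.subset_span ⟨_, _, by omega, by omega, rfl⟩, ?_⟩
      rw [LinearMap.mulLeft_apply, monA_mul]
      congr 1 <;> omega
    by_cases h2 : l ≤ k * ((i + 1 : ℕ) : ℤ) - j
    · refine (le_sup_right.trans le_sup_right : msmul (monA n (-j) 0) (OV k n) ≤ _) ?_
      refine ⟨monA n (l + j) (i + 1),
        Submodule.subset_span ⟨_, _, by linarith, by omega, rfl⟩, ?_⟩
      rw [LinearMap.mulLeft_apply, monA_mul]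
      congr 1 <;> omega
    · refine (le_sup_left : Rmod k n j ≤ _) ?_
      refine Submodule.subset_span ⟨_, _, by omega, by omega, ?_, by omega, rfl⟩
      push Not at h2
      linarith

/-- for `j ≥ 1` and every `q` in the ideal `uA` there is a unique `p ∈ R` with
`q − p ∈ z^j·O_U + z^{−j}·O_V`; equivalently there are `f ∈ O_U`, `g ∈ O_V` with
`q = p + z^j·f − z^{−j}·g`, and then `((1,g),(0,1))·M_q = M_p·((1,f),(0,1))`, so every bundle
with transition matrix `M_q` is isomorphic to `E_p` with `p` in the normal form `R`. -/
theorem statement4 (k n : ℕ) (hk : 1 ≤ k) (hn : 1 ≤ n) (j : ℤ) (hj : 1 ≤ j)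
    (q : Aq n) (hq : q ∈ Ideal.span {monA n 0 1}) :
    (∃! p : Aq n, p ∈ Rmod k n j ∧
      q - p ∈ msmul (monA n j 0) (OU n) ⊔ msmul (monA n (-j) 0) (OV k n)) ∧
    (∀ p : Aq n,
      q - p ∈ msmul (monA n j 0) (OU n) ⊔ msmul (monA n (-j) 0) (OV k n) ↔
        ∃ f ∈ OU n, ∃ g ∈ OV k n, q = p + monA n j 0 * f - monA n (-j) 0 * g) ∧
    (∀ p f g : Aq n, f ∈ OU n → g ∈ OV k n →
      q = p + monA n j 0 * f - monA n (-j) 0 * g →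
      !![1, g; 0, 1] * Mmat n j q = Mmat n j p * !![1, f; 0, 1]) := by
  refine ⟨?_, ?_, ?_⟩
  · obtain ⟨p, hp, w, hw, rfl⟩ := Submodule.mem_sup.1 (uA_le k n j q hq)
    refine ⟨p, ⟨hp, ?_⟩, ?_⟩
    · rwa [add_sub_cancel_left]
    · rintro p' ⟨hp', hw'⟩
      have h1 : p' - p ∈ Rmod k n j := Submodule.sub_mem _ hp' hp
      have h2 := Submodule.sub_mem _ hw hw'
      rw [show w - (p + w - p') = p' - p by abel] at h2
      exact sub_eq_zero.1
        (spanP_disj n _ _ (fun l i h h' => h h') _ (R_le k n j h1) (W_le k n j h2))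
  · intro p
    constructor
    · intro h
      obtain ⟨_, ⟨f, hf, rfl⟩, _, ⟨g, hg, rfl⟩, h⟩ := Submodule.mem_sup.1 h
      refine ⟨f, hf, -g, Submodule.neg_mem _ hg, ?_⟩
      rw [LinearMap.mulLeft_apply, LinearMap.mulLeft_apply] at h
      rw [sub_eq_iff_eq_add'.1 h.symm]
      ring
    · rintro ⟨f, hf, g, hg, rfl⟩
      refine Submodule.mem_sup.2 ⟨_, ⟨f, hf, rfl⟩, _, ⟨-g, Submodule.neg_mem _ hg, rfl⟩, ?_⟩
      rw [LinearMap.mulLeft_apply, LinearMap.mulLeft_apply]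
      ring
  · rintro p f g - - rfl
    ext a b
    fin_cases a <;> fin_cases b <;> simp [Mmat, Matrix.mul_apply, Fin.sum_univ_two] <;> ring
end
end

section
/- Fix an integer j ≥ 1. For every q in the ideal u·P of P there exists a unique element p of the (finite-dimensional) ℂ-span of the monomials z^l u^i with i ≥ 1 and k·i − j + 1 ≤ l ≤ j − 1, such that q − p ∈ z^j·O_U^∞ + z^{−j}·O_V^∞. (This is the normal-form lemma for transition matrices of extensions of O(j) by O(−j) on the formal neighborhood Ẑ_k: every such extension class has a unique representative in the finite-dimensional space of normal forms.) -/
set_option synthInstance.maxHeartbeats 1000000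
set_option maxHeartbeats 1000000

noncomputable section

/-- The coefficient of `z^l` in a Laurent polynomial, as a `ℂ`-linear map. -/
def coeffL (l : ℤ) : Lz →ₗ[ℂ] ℂ :=
  (Finsupp.lapply l).comp (AddMonoidAlgebra.coeffLinearEquiv ℂ).toLinearMap

/-- The coefficient of `z^l u^i` in an element of `P`, as a `ℂ`-linear map. -/
def coeffP (l : ℤ) (i : ℕ) : Pz →ₗ[ℂ] ℂ :=
  (coeffL l).comp ((PowerSeries.coeff (R := Lz) i).restrictScalars ℂ)

/-- `O_U^∞ ⊆ P`: elements whose `u^i`-coefficient, for every `i`, is supported in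
`z`-degrees `≥ 0`. -/
def OUinf : Submodule ℂ Pz where
  carrier := {f | ∀ (i : ℕ) (l : ℤ), l < 0 → coeffP l i f = 0}
  add_mem' := by
    intro f g hf hg i l hl
    simp only [Set.mem_setOf_eq] at *
    rw [map_add, hf i l hl, hg i l hl, add_zero]
  zero_mem' := by intro i l _; simp
  smul_mem' := by
    intro c f hf i l hl
    simp only [Set.mem_setOf_eq] at *
    rw [map_smul, hf i l hl, smul_zero]

/-- `O_V^∞ ⊆ P`: elements whose `u^i`-coefficient, for every `i`, is supported in
`z`-degrees `≤ k·i`. -/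
def OVinf (k : ℕ) : Submodule ℂ Pz where
  carrier := {f | ∀ (i : ℕ) (l : ℤ), (k : ℤ) * i < l → coeffP l i f = 0}
  add_mem' := by
    intro f g hf hg i l hl
    simp only [Set.mem_setOf_eq] at *
    rw [map_add, hf i l hl, hg i l hl, add_zero]
  zero_mem' := by intro i l _; simp
  smul_mem' := by
    intro c f hf i l hl
    simp only [Set.mem_setOf_eq] at *
    rw [map_smul, hf i l hl, smul_zero]

/-- The submodule `a·S` obtained from a submodule `S ⊆ P` by multiplying by `a`. -/
def msmulP (a : Pz) (S : Submodule ℂ Pz) : Submodule ℂ Pz :=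
  Submodule.map (LinearMap.mulLeft ℂ a) S

theorem coeffL_T (l a : ℤ) : coeffL l (LaurentPolynomial.T a) = if a = l then 1 else 0 :=
  LaurentPolynomial.T_apply l a

theorem coeffL_T_mul (l a : ℤ) (f : Lz) :
    coeffL l (LaurentPolynomial.T a * f) = coeffL (l - a) f := by
  have h : (AddMonoidAlgebra.single a (1 : ℂ) * f).coeff l = 1 * f.coeff (-a + l) :=
    AddMonoidAlgebra.coeff_single_mul_apply f (1 : ℂ) a l
  rw [one_mul, show -a + l = l - a by ring] at h
  exact h

theorem coeffL_ext (f g : Lz) (h : ∀ l, coeffL l f = coeffL l g) : f = g := by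
  apply (AddMonoidAlgebra.coeffLinearEquiv ℂ).injective
  ext l
  exact h l

theorem coeffP_ext (f g : Pz) (h : ∀ l i, coeffP l i f = coeffP l i g) : f = g := by
  ext1 i
  exact coeffL_ext _ _ fun l => h l i

theorem coeffP_mon (l a : ℤ) (i b : ℕ) :
    coeffP l i (mon a b) = if a = l ∧ b = i then 1 else 0 := by
  simp only [coeffP, mon, LinearMap.comp_apply, LinearMap.restrictScalars_apply,
    PowerSeries.coeff_monomial]
  by_cases h : i = b
  · simp [h, coeffL_T]
  · simp [h, Ne.symm h]

theorem coeffP_mon_mul (l a : ℤ) (i : ℕ) (f : Pz) :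
    coeffP l i (mon a 0 * f) = coeffP (l - a) i f := by
  simp only [coeffP, mon, LinearMap.comp_apply, LinearMap.restrictScalars_apply,
    PowerSeries.monomial_zero_eq_C_apply, PowerSeries.coeff_C_mul, coeffL_T_mul]

theorem mon_mul_cancel (a : ℤ) (f : Pz) : mon a 0 * (mon (-a) 0 * f) = f := by
  apply coeffP_ext
  intro l i
  rw [coeffP_mon_mul, coeffP_mon_mul]
  congr 2
  ring

/-- Truncation to degrees at least `j`. -/
def truncL (j : ℤ) (f : Lz) : Lz :=
  (AddMonoidAlgebra.coeffLinearEquiv ℂ).symm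
    ((AddMonoidAlgebra.coeffLinearEquiv ℂ f).filter (fun l => j ≤ l))

theorem coeffL_truncL (l j : ℤ) (f : Lz) :
    coeffL l (truncL j f) = if j ≤ l then coeffL l f else 0 := by
  simp only [coeffL, truncL, LinearMap.comp_apply, LinearEquiv.coe_coe,
    LinearEquiv.apply_symm_apply, Finsupp.lapply_apply, Finsupp.filter_apply]

/-- Truncation to `z`-degrees at least `j`. -/
def truncP (j : ℤ) (f : Pz) : Pz := PowerSeries.mk fun i => truncL j (PowerSeries.coeff i f)

theorem coeffP_truncP (l j : ℤ) (i : ℕ) (f : Pz) :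
    coeffP l i (truncP j f) = if j ≤ l then coeffP l i f else 0 := by
  simp only [coeffP, truncP, LinearMap.comp_apply, LinearMap.restrictScalars_apply,
    PowerSeries.coeff_mk, coeffL_truncL]

theorem mem_sup_iff (k : ℕ) (j : ℤ) (f : Pz) :
    f ∈ msmulP (mon j 0) OUinf ⊔ msmulP (mon (-j) 0) (OVinf k) ↔
      ∀ (l : ℤ) (i : ℕ), (k : ℤ) * i - j < l → l < j → coeffP l i f = 0 := by
  constructor
  · intro h l i h1 h2
    obtain ⟨a, ⟨a', ha, rfl⟩, b, ⟨b', hb, rfl⟩, rfl⟩ := Submodule.mem_sup.1 h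
    rw [map_add, LinearMap.mulLeft_apply, LinearMap.mulLeft_apply, coeffP_mon_mul,
      coeffP_mon_mul, ha i _ (by omega), hb i _ (by omega), add_zero]
  · intro h
    refine Submodule.mem_sup.2 ⟨truncP j f, ⟨mon (-j) 0 * truncP j f, ?_, ?_⟩,
      f - truncP j f, ⟨mon j 0 * (f - truncP j f), ?_, ?_⟩, by abel⟩
    · intro i l hl
      rw [coeffP_mon_mul, coeffP_truncP, if_neg (by omega)]
    · exact mon_mul_cancel j _
    · intro i l hl
      rw [coeffP_mon_mul, map_sub, coeffP_truncP]
      split_ifs with hc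
      · exact sub_self _
      · rw [h _ _ (by omega) (by omega), sub_zero]
    · have := mon_mul_cancel (-j) (f - truncP j f)
      rwa [neg_neg] at this

theorem coeffP_span (k : ℕ) (j : ℤ) (p : Pz)
    (hp : p ∈ Submodule.span ℂ
        {x | ∃ l : ℤ, ∃ i : ℕ, 1 ≤ i ∧ (k : ℤ) * i - j + 1 ≤ l ∧ l ≤ j - 1 ∧ x = mon l i})
    (l : ℤ) (i : ℕ) (h : ¬ (1 ≤ i ∧ (k : ℤ) * i - j + 1 ≤ l ∧ l ≤ j - 1)) :
    coeffP l i p = 0 := by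
  have : Submodule.span ℂ
        {x | ∃ l : ℤ, ∃ i : ℕ, 1 ≤ i ∧ (k : ℤ) * i - j + 1 ≤ l ∧ l ≤ j - 1 ∧ x = mon l i}
      ≤ LinearMap.ker (coeffP l i) := by
    rw [Submodule.span_le]
    rintro x ⟨a, b, h1, h2, h3, rfl⟩
    rw [SetLike.mem_coe, LinearMap.mem_ker, coeffP_mon, if_neg]
    rintro ⟨rfl, rfl⟩
    exact h ⟨h1, h2, h3⟩
  exact this hp

theorem coeffP_zero_of_mem (q : Pz) (hq : q ∈ Ideal.span {(PowerSeries.X : Pz)}) (l : ℤ) :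
    coeffP l 0 q = 0 := by
  obtain ⟨r, rfl⟩ := Ideal.mem_span_singleton.1 hq
  simp [coeffP]

/-- for `j ≥ 1` and every `q` in the ideal `u·P` there is a unique element `p` of
the (finite-dimensional) `ℂ`-span of the monomials `z^l u^i` with `i ≥ 1` and
`k·i − j + 1 ≤ l ≤ j − 1` such that `q − p ∈ z^j·O_U^∞ + z^{−j}·O_V^∞`. -/
theorem statement5 (k : ℕ) (hk : 1 ≤ k) (j : ℤ) (hj : 1 ≤ j)
    (q : Pz) (hq : q ∈ Ideal.span {(PowerSeries.X : Pz)}) :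
    ∃! p : Pz,
      p ∈ Submodule.span ℂ
        {x | ∃ l : ℤ, ∃ i : ℕ, 1 ≤ i ∧ (k : ℤ) * i - j + 1 ≤ l ∧ l ≤ j - 1 ∧ x = mon l i} ∧
      q - p ∈ msmulP (mon j 0) OUinf ⊔ msmulP (mon (-j) 0) (OVinf k) := by
  classical
  let S : Finset (ℤ × ℕ) := (Finset.Icc (-j) j ×ˢ Finset.Icc 1 (2 * j).toNat).filter
    (fun x => (k : ℤ) * x.2 - j + 1 ≤ x.1 ∧ x.1 ≤ j - 1)
  have hS : ∀ (l : ℤ) (i : ℕ),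
      (l, i) ∈ S ↔ (1 ≤ i ∧ (k : ℤ) * i - j + 1 ≤ l ∧ l ≤ j - 1) := by
    intro l i
    simp only [S, Finset.mem_filter, Finset.mem_product, Finset.mem_Icc]
    constructor
    · rintro ⟨⟨_, h, _⟩, h2⟩
      exact ⟨h, h2⟩
    · rintro ⟨h1, h2, h3⟩
      have : (i : ℤ) ≤ k * i := by
        have : (1 : ℤ) ≤ k := by exact_mod_cast hk
        nlinarith
      refine ⟨⟨⟨by omega, by omega⟩, h1, by omega⟩, h2, h3⟩
  refine ⟨∑ x ∈ S, coeffP x.1 x.2 q • mon x.1 x.2, ⟨?_, ?_⟩, ?_⟩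
  · refine Submodule.sum_mem _ fun x hx => Submodule.smul_mem _ _ (Submodule.subset_span ?_)
    obtain ⟨h1, h2, h3⟩ := (hS x.1 x.2).1 hx
    exact ⟨x.1, x.2, h1, h2, h3, rfl⟩
  · rw [mem_sup_iff]
    intro l i h1 h2
    rcases Nat.eq_zero_or_pos i with rfl | hi
    · rw [map_sub, coeffP_zero_of_mem q hq, map_sum, Finset.sum_eq_zero, sub_zero]
      intro x hx
      obtain ⟨h3, -, -⟩ := (hS x.1 x.2).1 hx
      rw [map_smul, coeffP_mon, if_neg (by omega), smul_zero]
    · rw [map_sub, map_sum, Finset.sum_eq_single (l, i)]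
      · rw [map_smul, coeffP_mon, if_pos ⟨rfl, rfl⟩, smul_eq_mul, mul_one, sub_self]
      · intro x _ hne
        rw [map_smul, coeffP_mon, if_neg, smul_zero]
        rintro ⟨rfl, rfl⟩
        exact hne rfl
      · intro hn
        exact absurd ((hS l i).2 ⟨hi, by omega, by omega⟩) hn
  · rintro p ⟨hp, hqp⟩
    rw [mem_sup_iff] at hqp
    apply coeffP_ext
    intro l i
    rw [map_sum]
    by_cases h : (l, i) ∈ S
    · rw [Finset.sum_eq_single (l, i)]
      · obtain ⟨h1, h2, h3⟩ := (hS l i).1 h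
        have := hqp l i (by omega) (by omega)
        rw [map_sub, sub_eq_zero] at this
        rw [map_smul, coeffP_mon, if_pos ⟨rfl, rfl⟩, smul_eq_mul, mul_one, this]
      · intro x _ hne
        rw [map_smul, coeffP_mon, if_neg, smul_zero]
        rintro ⟨rfl, rfl⟩
        exact hne rfl
      · exact fun hn => absurd h hn
    · rw [coeffP_span k j p hp l i (fun h' => h ((hS l i).2 h')), Finset.sum_eq_zero]
      intro x hx
      rw [map_smul, coeffP_mon, if_neg, smul_zero]
      rintro ⟨rfl, rfl⟩
      exact h hx
end
end
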